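/- arXiv:0903.4969 — 2 statements merged into one kernel-verified Lean document; each statement's English description precedes it below -/
import Mathlib

section
/- Let P = ∏_{1≤j<k≤15} (1 + t_j + t_k) in 𝔽₂[t₁,…,t₁₅], and let P₈ denote the homogeneous component of P of degree 8. Then P₈ is congruent to e₈ + e₄² modulo the ideal generated by e₁, e₂, e₃, e₅. -/
open MvPolynomial Finset

/-- The `i`-th elementary symmetric polynomial in `𝔽₂[t₁,…,t₁₅]`. -/
noncomputable def e (i : ℕ) : MvPolynomial (Fin 15) (ZMod 2) :=
  esymm (Fin 15) (ZMod 2) i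

/-- `P = ∏_{1≤j<k≤15} (1 + t_j + t_k)` in `𝔽₂[t₁,…,t₁₅]`. -/
noncomputable def P : MvPolynomial (Fin 15) (ZMod 2) :=
  ∏ p ∈ univ.filter (fun p : Fin 15 × Fin 15 => p.1 < p.2), (1 + X p.1 + X p.2)

lemma P_sq : P ^ 2 = ∏ p : Fin 15 × Fin 15,
    (1 + X p.1 + X p.2 : MvPolynomial (Fin 15) (ZMod 2)) := by
  have h1 : P = ∏ p ∈ univ.filter (fun p : Fin 15 × Fin 15 => p.2 < p.1),
      (1 + X p.1 + X p.2 : MvPolynomial (Fin 15) (ZMod 2)) := by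
    unfold P
    refine Finset.prod_nbij' Prod.swap Prod.swap ?_ ?_ ?_ ?_ ?_
    · simp
    · simp
    · simp
    · simp
    · intro p _
      simp only [Prod.fst_swap, Prod.snd_swap]
      ring
  rw [sq]
  nth_rw 2 [h1]
  rw [← Finset.prod_filter_mul_prod_filter_not univ (fun p : Fin 15 × Fin 15 => p.1 < p.2)]
  unfold P
  refine congrArg₂ _ rfl ?_
  refine Finset.prod_subset ?_ ?_
  · intro p
    simp only [mem_filter, mem_univ, true_and]
    omega
  · intro p hp hq
    simp only [mem_filter, mem_univ, true_and] at hp hq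
    have : p.1 = p.2 := by omega
    rw [this, add_assoc, CharTwo.add_self_eq_zero, add_zero]

lemma P_symm : P.IsSymmetric := by
  intro s
  have h : (rename s P) ^ 2 = P ^ 2 := by
    rw [← map_pow, P_sq, map_prod]
    refine Fintype.prod_equiv (Equiv.prodCongr s s) _ _ ?_
    intro p
    simp
  exact frobenius_inj (MvPolynomial (Fin 15) (ZMod 2)) 2 (by simpa [frobenius_def] using h)

lemma P8_symm : (homogeneousComponent 8 P).IsSymmetric := by
  intro s
  have := P_symm s
  rw [rename_homogeneousComponent, this]

lemma e_hom (n : ℕ) : (e n).IsHomogeneous n := by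
  unfold e esymm
  refine IsHomogeneous.sum _ _ _ ?_
  intro t ht
  have := IsHomogeneous.prod t (fun i => (X i : MvPolynomial (Fin 15) (ZMod 2))) (fun _ => 1)
    (fun i _ => isHomogeneous_X _ i)
  simpa [(mem_powersetCard.1 ht).2] using this

lemma sum_cases (m : Fin 15 → ℕ) (h8 : ∑ i : Fin 15, ((i : ℕ) + 1) * m i = 8) (h0 : m 0 = 0)
    (h1 : m 1 = 0) (h2 : m 2 = 0) (h4 : m 4 = 0) :
    (∀ i, m i = if i = 7 then 1 else 0) ∨ (∀ i, m i = if i = 3 then 2 else 0) := by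
  have hle : ∀ i : Fin 15, ((i : ℕ) + 1) * m i ≤ 8 := fun i => by
    rw [← h8]
    exact Finset.single_le_sum (f := fun i : Fin 15 => ((i : ℕ) + 1) * m i)
      (fun _ _ => Nat.zero_le _) (mem_univ i)
  have hbig : ∀ i : Fin 15, 8 ≤ (i : ℕ) → m i = 0 := fun i hi => by
    have := hle i
    by_contra hne
    have : 9 * 1 ≤ ((i : ℕ) + 1) * m i := Nat.mul_le_mul (by omega) (by omega)
    omega
  have hs : 4 * m 3 + 6 * m 5 + 7 * m 6 + 8 * m 7 = 8 := by
    have h := h8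
    simp only [Fin.sum_univ_succ, Fin.sum_univ_zero] at h
    have e8 := hbig 8 (by decide)
    have e9 := hbig 9 (by decide)
    have e10 := hbig 10 (by decide)
    have e11 := hbig 11 (by decide)
    have e12 := hbig 12 (by decide)
    have e13 := hbig 13 (by decide)
    have e14 := hbig 14 (by decide)
    simp [Fin.succ, h0, h1, h2, h4, e8, e9, e10, e11, e12, e13, e14] at h
    omega
  have h5 : m 5 = 0 := by omega
  have h6 : m 6 = 0 := by omega
  have hor : (m 7 = 1 ∧ m 3 = 0) ∨ (m 3 = 2 ∧ m 7 = 0) := by omega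
  rcases hor with ⟨h7, h3⟩ | ⟨h3, h7⟩
  · left
    intro i
    by_cases hi : 8 ≤ (i : ℕ)
    · rw [hbig i hi, if_neg (by rintro rfl; simp at hi)]
    · fin_cases i <;> simp_all
  · right
    intro i
    by_cases hi : 8 ≤ (i : ℕ)
    · rw [hbig i hi, if_neg (by rintro rfl; simp at hi)]
    · fin_cases i <;> simp_all

lemma key (q : MvPolynomial (Fin 15) (ZMod 2)) : ∃ a b : ZMod 2,
    homogeneousComponent 8 (aeval (fun i : Fin 15 => e (i + 1)) q) - (C a * e 8 + C b * e 4 ^ 2)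
      ∈ Ideal.span {e 1, e 2, e 3, e 5} := by
  induction q using MvPolynomial.induction_on' with
  | add p q hp hq =>
    obtain ⟨a, b, h⟩ := hp
    obtain ⟨c, d, k⟩ := hq
    refine ⟨a + c, b + d, ?_⟩
    convert Ideal.add_mem _ h k using 1
    simp only [map_add]
    ring
  | monomial m r =>
    have hM : (∏ i : Fin 15, e (i + 1) ^ m i).IsHomogeneous (∑ i : Fin 15, (i + 1) * m i) :=
      IsHomogeneous.prod _ _ _ fun i _ => (e_hom _).pow _
    rw [aeval_monomial, Finsupp.prod_fintype _ _ (by simp), algebraMap_eq,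
      homogeneousComponent_C_mul]
    by_cases h8 : ∑ i : Fin 15, ((i : ℕ) + 1) * m i = 8
    · rw [h8] at hM
      rw [homogeneousComponent_eq_self hM]
      have hI : ∀ i : Fin 15, m i ≠ 0 → e (i + 1) ∈ Ideal.span {e 1, e 2, e 3, e 5} →
          ∃ a b : ZMod 2, C r * (∏ i : Fin 15, e (i + 1) ^ m i) - (C a * e 8 + C b * e 4 ^ 2)
            ∈ Ideal.span {e 1, e 2, e 3, e 5} := by
        intro i hi he
        refine ⟨0, 0, ?_⟩
        simp only [map_zero, zero_mul, add_zero, sub_zero]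
        refine Ideal.mul_mem_left _ _ (Ideal.mem_of_dvd _ ?_ he)
        exact (dvd_pow_self _ hi).trans (Finset.dvd_prod_of_mem _ (mem_univ i))
      by_cases h0 : m 0 = 0
      swap
      · exact hI 0 h0 (Ideal.subset_span (by simp))
      by_cases h1 : m 1 = 0
      swap
      · exact hI 1 h1 (Ideal.subset_span (by simp))
      by_cases h2 : m 2 = 0
      swap
      · exact hI 2 h2 (Ideal.subset_span (by simp))
      by_cases h4 : m 4 = 0
      swap
      · exact hI 4 h4 (Ideal.subset_span (by simp))
      rcases sum_cases m h8 h0 h1 h2 h4 with h | h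
      · refine ⟨r, 0, ?_⟩
        rw [Finset.prod_eq_single 7 (fun i _ hi => by simp [h, hi]) (by simp), h]
        simp
      · refine ⟨0, r, ?_⟩
        rw [Finset.prod_eq_single 3 (fun i _ hi => by simp [h, hi]) (by simp), h]
        simp
    · refine ⟨0, 0, ?_⟩
      rw [homogeneousComponent_of_mem hM, if_neg (fun h => h8 h.symm)]
      simp

/-- Evaluation at `k` copies of `X` and `15 - k` copies of `0`. -/
noncomputable def phi (k : ℕ) : MvPolynomial (Fin 15) (ZMod 2) →ₐ[ZMod 2] Polynomial (ZMod 2) :=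
  aeval (fun i : Fin 15 => if (i : ℕ) < k then Polynomial.X else 0)

lemma phi_e (k : ℕ) (hk : k ≤ 15) (n : ℕ) :
    phi k (e n) = (k.choose n : Polynomial (ZMod 2)) * Polynomial.X ^ n := by
  unfold phi e
  rw [aeval_esymm_eq_multiset_esymm, Finset.esymm_map_val]
  simp_rw [Finset.prod_ite_zero, Finset.prod_const]
  rw [← Finset.sum_filter]
  have : (powersetCard n (univ : Finset (Fin 15))).filter (fun t => ∀ i : Fin 15, i ∈ t → (i : ℕ) < k)
      = powersetCard n (univ.filter (fun i : Fin 15 => (i : ℕ) < k)) := by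
    ext t
    simp [mem_powersetCard, Finset.subset_iff, and_comm]
  have hsum := Finset.sum_congr (f := fun t : Finset (Fin 15) => (Polynomial.X ^ #t : Polynomial (ZMod 2)))
    this (fun _ _ => rfl)
  refine Eq.trans (by convert hsum) ?_
  rw [Finset.sum_congr rfl (fun t ht => by rw [(mem_powersetCard.1 ht).2]), sum_const,
    card_powersetCard, nsmul_eq_mul]
  have : #(univ.filter (fun i : Fin 15 => (i : ℕ) < k)) = k := by
    rw [Fin.card_filter_val_lt]
    omega
  rw [this]

lemma phi_coeff (k : ℕ) (p : MvPolynomial (Fin 15) (ZMod 2)) :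
    (phi k (homogeneousComponent 8 p)).coeff 8 = (phi k p).coeff 8 := by
  induction p using MvPolynomial.induction_on' with
  | add p q hp hq => simp [hp, hq]
  | monomial m r =>
    have hM := isHomogeneous_monomial (R := ZMod 2) (d := m) r rfl
    rw [homogeneousComponent_of_mem hM]
    split_ifs with h
    · rfl
    · have : phi k (monomial m r) = Polynomial.C r *
          if ∀ i ∈ m.support, (i : ℕ) < k then Polynomial.X ^ m.degree else 0 := by
        unfold phi
        rw [aeval_monomial, Finsupp.prod]
        congr 1
        have : ∀ i ∈ m.support, (if (i : ℕ) < k then (Polynomial.X : Polynomial (ZMod 2)) else 0) ^ m i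
            = if (i : ℕ) < k then Polynomial.X ^ m i else 0 := by
          intro i hi
          split_ifs
          · rfl
          · exact zero_pow (by simpa using hi)
        rw [Finset.prod_congr rfl this, Finset.prod_ite_zero, Finset.prod_pow_eq_pow_sum]
        congr 1
      rw [this]
      split_ifs
      · simp [Polynomial.coeff_X_pow, h]
      · simp

lemma phi_P (k : ℕ) : phi k P = (1 + Polynomial.X) ^
    #{p : Fin 15 × Fin 15 | p.1 < p.2 ∧ (p.1 : ℕ) < k ∧ ¬ (p.2 : ℕ) < k} := by
  unfold phi P
  rw [map_prod, ← Finset.filter_filter, ← Finset.prod_const,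
    Finset.prod_filter (fun p : Fin 15 × Fin 15 => (p.1 : ℕ) < k ∧ ¬ (p.2 : ℕ) < k)]
  refine Finset.prod_congr rfl ?_
  intro p hp
  simp only [mem_filter, mem_univ, true_and] at hp
  simp only [map_add, map_one, aeval_X]
  by_cases h1 : (p.1 : ℕ) < k <;> by_cases h2 : (p.2 : ℕ) < k
  · simp [h1, h2, add_assoc, CharTwo.add_self_eq_zero]
  · simp [h1, h2]
  · omega
  · simp [h1, h2]

lemma phi_I (k : ℕ) (hk : k ≤ 15) (h1 : (k : ZMod 2) = 0) (h2 : (k.choose 2 : ZMod 2) = 0)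
    (h3 : (k.choose 3 : ZMod 2) = 0) (h5 : (k.choose 5 : ZMod 2) = 0)
    (p : MvPolynomial (Fin 15) (ZMod 2)) (hp : p ∈ Ideal.span {e 1, e 2, e 3, e 5}) :
    phi k p = 0 := by
  have : Ideal.span {e 1, e 2, e 3, e 5} ≤ RingHom.ker (phi k) := by
    have hc : ∀ n : ℕ, (n : ZMod 2) = 0 → (n : Polynomial (ZMod 2)) = 0 := by
      intro n h
      rw [← Polynomial.C_eq_natCast, h, map_zero]
    rw [Ideal.span_le]
    rintro x (rfl | rfl | rfl | rfl) <;>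
      simp [RingHom.mem_ker, phi_e k hk, hc _ h1, hc _ h2, hc _ h3, hc _ h5]
  exact this hp

/-- the degree-8 homogeneous component `P₈` of `P` is congruent to
`e₈ + e₄²` modulo the ideal `(e₁, e₂, e₃, e₅)`. -/
theorem lambda2_spin15_w8 :
    homogeneousComponent 8 P - (e 8 + e 4 ^ 2) ∈ Ideal.span {e 1, e 2, e 3, e 5} := by
  obtain ⟨q, hq⟩ := esymmAlgHom_surjective (σ := Fin 15) (R := ZMod 2) (n := 15) (by simp)
    ⟨homogeneousComponent 8 P, P8_symm⟩
  have hq' : aeval (fun i : Fin 15 => e (i + 1)) q = homogeneousComponent 8 P := by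
    have := congrArg Subtype.val hq
    rw [esymmAlgHom_apply] at this
    exact this
  obtain ⟨a, b, h⟩ := key q
  rw [hq', homogeneousComponent_eq_self (homogeneousComponent_isHomogeneous 8 P)] at h
  have hC : ∀ k, ∀ a : ZMod 2, phi k (C a) = Polynomial.C a := fun k a => by
    simp [phi]
  have hb : b = 1 := by
    have := congrArg (fun f => Polynomial.coeff f 8)
      (phi_I 4 (by simp) (by decide) (by decide) (by decide) (by decide) _ h)
    have hc : #{p : Fin 15 × Fin 15 | p.1 < p.2 ∧ (p.1 : ℕ) < 4 ∧ ¬ (p.2 : ℕ) < 4} = 44 := by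
      decide +kernel
    simp only [map_sub, map_add, map_mul, map_pow, hC, Polynomial.coeff_sub, phi_coeff, phi_P, hc,
      phi_e 4 (by simp), Polynomial.coeff_one_add_X_pow] at this
    have h44 : ((Nat.choose 44 8 : ℕ) : ZMod 2) = 1 := by
      decide +kernel
    rw [h44] at this
    simp [← pow_mul, Nat.choose] at this
    exact (sub_eq_zero.1 this).symm
  have ha : a = 1 := by
    have := congrArg (fun f => Polynomial.coeff f 8)
      (phi_I 8 (by simp) (by decide) (by decide) (by decide) (by decide) _ h)
    have hc : #{p : Fin 15 × Fin 15 | p.1 < p.2 ∧ (p.1 : ℕ) < 8 ∧ ¬ (p.2 : ℕ) < 8} = 56 := by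
      decide +kernel
    have h4 : ((Nat.choose 8 4 : ℕ) : Polynomial (ZMod 2)) = 0 := by
      rw [← Polynomial.C_eq_natCast, show ((Nat.choose 8 4 : ℕ) : ZMod 2) = 0 by decide, map_zero]
    simp only [map_sub, map_add, map_mul, map_pow, hC, Polynomial.coeff_sub, phi_coeff, phi_P, hc,
      phi_e 8 (by simp), Polynomial.coeff_one_add_X_pow, h4] at this
    have h44 : ((Nat.choose 56 8 : ℕ) : ZMod 2) = 1 := by
      decide +kernel
    rw [h44] at this
    simp at this
    exact (sub_eq_zero.1 this).symm
  simpa [ha, hb] using h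
end

section
/- Let P = ∏_{1≤j<k≤15} (1 + t_j + t_k) in 𝔽₂[t₁,…,t₁₅], and let P₁₆ denote the homogeneous component of P of degree 16. Then P₁₆ is congruent to e₈² + e₄²e₈ + e₄e₆² modulo the ideal generated by e₁, e₂, e₃, e₅, e₉. -/
open MvPolynomial Finset

set_option linter.unusedSimpArgs false in
set_option maxHeartbeats 4000000 in
lemma newton_calc {T : Type*} [CommRing T] [IsDomain T] [CharZero T] (e p q w : ℕ → T)
    (h0 : e 0 = 1) (h1 : e 1 = 0) (h2 : e 2 = 0) (h3 : e 3 = 0) (h5 : e 5 = 0) (h9 : e 9 = 0)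
    (h16 : e 16 = 0) (p0 : p 0 = 15) (w0 : w 0 = 1)
    (hp : ∀ k : ℕ, (k : T) * e k = (-1) ^ (k + 1) * ∑ i ∈ range k, (-1) ^ i * e i * p (k - i))
    (hq : ∀ m : ℕ, 2 * q m + 2 ^ m * p m = ∑ i ∈ range (m + 1), p i * p (m - i) * (m.choose i : T))
    (hw : ∀ k : ℕ, (k : T) * w k = (-1) ^ (k + 1) * ∑ i ∈ range k, (-1) ^ i * w i * q (k - i)) :
    w 16 = (13062) * e 4 * e 12 + (2195) * e 4 * e 4 * e 8 + (-330) * e 4 * e 4 * e 4 * e 4 + (-1449) * e 4 * e 6 * e 6 + (11172) * e 6 * e 10 + (-2979) * e 8 * e 8 := by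
  have p1 : p 1 = 0 := by
    have h := hp 1
    simp only [Finset.sum_range_succ, Finset.sum_range_zero, Nat.reduceSub, h0, h1, h2, h3, h5, h9, h16] at h
    push_cast at h
    linear_combination -h
  have p2 : p 2 = 0 := by
    have h := hp 2
    simp only [Finset.sum_range_succ, Finset.sum_range_zero, Nat.reduceSub, h0, h1, h2, h3, h5, h9, h16, p1] at h
    push_cast at h
    linear_combination h
  have p3 : p 3 = 0 := by
    have h := hp 3
    simp only [Finset.sum_range_succ, Finset.sum_range_zero, Nat.reduceSub, h0, h1, h2, h3, h5, h9, h16, p1, p2] at h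
    push_cast at h
    linear_combination -h
  have p4 : p 4 = (-4) * e 4 := by
    have h := hp 4
    simp only [Finset.sum_range_succ, Finset.sum_range_zero, Nat.reduceSub, h0, h1, h2, h3, h5, h9, h16, p1, p2, p3] at h
    push_cast at h
    linear_combination h
  have p5 : p 5 = 0 := by
    have h := hp 5
    simp only [Finset.sum_range_succ, Finset.sum_range_zero, Nat.reduceSub, h0, h1, h2, h3, h5, h9, h16, p1, p2, p3, p4] at h
    push_cast at h
    linear_combination -h
  have p6 : p 6 = (-6) * e 6 := by
    have h := hp 6
    simp only [Finset.sum_range_succ, Finset.sum_range_zero, Nat.reduceSub, h0, h1, h2, h3, h5, h9, h16, p1, p2, p3, p4, p5] at h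
    push_cast at h
    linear_combination h
  have p7 : p 7 = (7) * e 7 := by
    have h := hp 7
    simp only [Finset.sum_range_succ, Finset.sum_range_zero, Nat.reduceSub, h0, h1, h2, h3, h5, h9, h16, p1, p2, p3, p4, p5, p6] at h
    push_cast at h
    linear_combination -h
  have p8 : p 8 = (-8) * e 8 + (4) * e 4 * e 4 := by
    have h := hp 8
    simp only [Finset.sum_range_succ, Finset.sum_range_zero, Nat.reduceSub, h0, h1, h2, h3, h5, h9, h16, p1, p2, p3, p4, p5, p6, p7] at h
    push_cast at h
    linear_combination h
  have p9 : p 9 = 0 := by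
    have h := hp 9
    simp only [Finset.sum_range_succ, Finset.sum_range_zero, Nat.reduceSub, h0, h1, h2, h3, h5, h9, h16, p1, p2, p3, p4, p5, p6, p7, p8] at h
    push_cast at h
    linear_combination -h
  have p10 : p 10 = (-10) * e 10 + (10) * e 4 * e 6 := by
    have h := hp 10
    simp only [Finset.sum_range_succ, Finset.sum_range_zero, Nat.reduceSub, h0, h1, h2, h3, h5, h9, h16, p1, p2, p3, p4, p5, p6, p7, p8, p9] at h
    push_cast at h
    linear_combination h
  have p11 : p 11 = (11) * e 11 + (-11) * e 4 * e 7 := by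
    have h := hp 11
    simp only [Finset.sum_range_succ, Finset.sum_range_zero, Nat.reduceSub, h0, h1, h2, h3, h5, h9, h16, p1, p2, p3, p4, p5, p6, p7, p8, p9, p10] at h
    push_cast at h
    linear_combination -h
  have p12 : p 12 = (-12) * e 12 + (12) * e 4 * e 8 + (-4) * e 4 * e 4 * e 4 + (6) * e 6 * e 6 := by
    have h := hp 12
    simp only [Finset.sum_range_succ, Finset.sum_range_zero, Nat.reduceSub, h0, h1, h2, h3, h5, h9, h16, p1, p2, p3, p4, p5, p6, p7, p8, p9, p10, p11] at h
    push_cast at h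
    linear_combination h
  have p13 : p 13 = (13) * e 13 + (-13) * e 6 * e 7 := by
    have h := hp 13
    simp only [Finset.sum_range_succ, Finset.sum_range_zero, Nat.reduceSub, h0, h1, h2, h3, h5, h9, h16, p1, p2, p3, p4, p5, p6, p7, p8, p9, p10, p11, p12] at h
    push_cast at h
    linear_combination -h
  have p14 : p 14 = (-14) * e 14 + (14) * e 4 * e 10 + (-14) * e 4 * e 4 * e 6 + (14) * e 6 * e 8 + (7) * e 7 * e 7 := by
    have h := hp 14
    simp only [Finset.sum_range_succ, Finset.sum_range_zero, Nat.reduceSub, h0, h1, h2, h3, h5, h9, h16, p1, p2, p3, p4, p5, p6, p7, p8, p9, p10, p11, p12, p13] at h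
    push_cast at h
    linear_combination h
  have p15 : p 15 = (15) * e 15 + (-15) * e 4 * e 11 + (15) * e 4 * e 4 * e 7 + (-15) * e 7 * e 8 := by
    have h := hp 15
    simp only [Finset.sum_range_succ, Finset.sum_range_zero, Nat.reduceSub, h0, h1, h2, h3, h5, h9, h16, p1, p2, p3, p4, p5, p6, p7, p8, p9, p10, p11, p12, p13, p14] at h
    push_cast at h
    linear_combination -h
  have p16 : p 16 = (16) * e 4 * e 12 + (-16) * e 4 * e 4 * e 8 + (4) * e 4 * e 4 * e 4 * e 4 + (-16) * e 4 * e 6 * e 6 + (16) * e 6 * e 10 + (8) * e 8 * e 8 := by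
    have h := hp 16
    simp only [Finset.sum_range_succ, Finset.sum_range_zero, Nat.reduceSub, h0, h1, h2, h3, h5, h9, h16, p1, p2, p3, p4, p5, p6, p7, p8, p9, p10, p11, p12, p13, p14, p15] at h
    push_cast at h
    linear_combination h
  have q1 : q 1 = 0 := by
    have h := hq 1
    simp only [Finset.sum_range_succ, Finset.sum_range_zero, Nat.reduceSub, Nat.reduceAdd, Nat.choose, p0, p1] at h
    push_cast at h
    apply mul_left_cancel₀ (two_ne_zero (α := T))
    linear_combination h
  have q2 : q 2 = 0 := by
    have h := hq 2
    simp only [Finset.sum_range_succ, Finset.sum_range_zero, Nat.reduceSub, Nat.reduceAdd, Nat.choose, p0, p1, p2] at h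
    push_cast at h
    apply mul_left_cancel₀ (two_ne_zero (α := T))
    linear_combination h
  have q3 : q 3 = 0 := by
    have h := hq 3
    simp only [Finset.sum_range_succ, Finset.sum_range_zero, Nat.reduceSub, Nat.reduceAdd, Nat.choose, p0, p1, p2, p3] at h
    push_cast at h
    apply mul_left_cancel₀ (two_ne_zero (α := T))
    linear_combination h
  have q4 : q 4 = (-28) * e 4 := by
    have h := hq 4
    simp only [Finset.sum_range_succ, Finset.sum_range_zero, Nat.reduceSub, Nat.reduceAdd, Nat.choose, p0, p1, p2, p3, p4] at h
    push_cast at h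
    apply mul_left_cancel₀ (two_ne_zero (α := T))
    linear_combination h
  have q5 : q 5 = 0 := by
    have h := hq 5
    simp only [Finset.sum_range_succ, Finset.sum_range_zero, Nat.reduceSub, Nat.reduceAdd, Nat.choose, p0, p1, p2, p3, p4, p5] at h
    push_cast at h
    apply mul_left_cancel₀ (two_ne_zero (α := T))
    linear_combination h
  have q6 : q 6 = (102) * e 6 := by
    have h := hq 6
    simp only [Finset.sum_range_succ, Finset.sum_range_zero, Nat.reduceSub, Nat.reduceAdd, Nat.choose, p0, p1, p2, p3, p4, p5, p6] at h
    push_cast at h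
    apply mul_left_cancel₀ (two_ne_zero (α := T))
    linear_combination h
  have q7 : q 7 = (-343) * e 7 := by
    have h := hq 7
    simp only [Finset.sum_range_succ, Finset.sum_range_zero, Nat.reduceSub, Nat.reduceAdd, Nat.choose, p0, p1, p2, p3, p4, p5, p6, p7] at h
    push_cast at h
    apply mul_left_cancel₀ (two_ne_zero (α := T))
    linear_combination h
  have q8 : q 8 = (904) * e 8 + (108) * e 4 * e 4 := by
    have h := hq 8
    simp only [Finset.sum_range_succ, Finset.sum_range_zero, Nat.reduceSub, Nat.reduceAdd, Nat.choose, p0, p1, p2, p3, p4, p5, p6, p7, p8] at h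
    push_cast at h
    apply mul_left_cancel₀ (two_ne_zero (α := T))
    linear_combination h
  have q9 : q 9 = 0 := by
    have h := hq 9
    simp only [Finset.sum_range_succ, Finset.sum_range_zero, Nat.reduceSub, Nat.reduceAdd, Nat.choose, p0, p1, p2, p3, p4, p5, p6, p7, p8, p9] at h
    push_cast at h
    apply mul_left_cancel₀ (two_ne_zero (α := T))
    linear_combination h
  have q10 : q 10 = (4970) * e 10 + (70) * e 4 * e 6 := by
    have h := hq 10
    simp only [Finset.sum_range_succ, Finset.sum_range_zero, Nat.reduceSub, Nat.reduceAdd, Nat.choose, p0, p1, p2, p3, p4, p5, p6, p7, p8, p9, p10] at h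
    push_cast at h
    apply mul_left_cancel₀ (two_ne_zero (α := T))
    linear_combination h
  have q11 : q 11 = (-11099) * e 11 + (1859) * e 4 * e 7 := by
    have h := hq 11
    simp only [Finset.sum_range_succ, Finset.sum_range_zero, Nat.reduceSub, Nat.reduceAdd, Nat.choose, p0, p1, p2, p3, p4, p5, p6, p7, p8, p9, p10, p11] at h
    push_cast at h
    apply mul_left_cancel₀ (two_ne_zero (α := T))
    linear_combination h
  have q12 : q 12 = (24396) * e 12 + (-8556) * e 4 * e 8 + (212) * e 4 * e 4 * e 4 + (4434) * e 6 * e 6 := by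
    have h := hq 12
    simp only [Finset.sum_range_succ, Finset.sum_range_zero, Nat.reduceSub, Nat.reduceAdd, Nat.choose, p0, p1, p2, p3, p4, p5, p6, p7, p8, p9, p10, p11, p12] at h
    push_cast at h
    apply mul_left_cancel₀ (two_ne_zero (α := T))
    linear_combination h
  have q13 : q 13 = (-53053) * e 13 + (-19019) * e 6 * e 7 := by
    have h := hq 13
    simp only [Finset.sum_range_succ, Finset.sum_range_zero, Nat.reduceSub, Nat.reduceAdd, Nat.choose, p0, p1, p2, p3, p4, p5, p6, p7, p8, p9, p10, p11, p12, p13] at h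
    push_cast at h
    apply mul_left_cancel₀ (two_ne_zero (α := T))
    linear_combination h
  have q14 : q 14 = (114478) * e 14 + (-74438) * e 4 * e 10 + (2366) * e 4 * e 4 * e 6 + (29666) * e 6 * e 8 + (26845) * e 7 * e 7 := by
    have h := hq 14
    simp only [Finset.sum_range_succ, Finset.sum_range_zero, Nat.reduceSub, Nat.reduceAdd, Nat.choose, p0, p1, p2, p3, p4, p5, p6, p7, p8, p9, p10, p11, p12, p13, p14] at h
    push_cast at h
    apply mul_left_cancel₀ (two_ne_zero (α := T))
    linear_combination h
  have q15 : q 15 = (-245535) * e 15 + (185475) * e 4 * e 11 + (-5295) * e 4 * e 4 * e 7 + (-114825) * e 7 * e 8 := by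
    have h := hq 15
    simp only [Finset.sum_range_succ, Finset.sum_range_zero, Nat.reduceSub, Nat.reduceAdd, Nat.choose, p0, p1, p2, p3, p4, p5, p6, p7, p8, p9, p10, p11, p12, p13, p14, p15] at h
    push_cast at h
    apply mul_left_cancel₀ (two_ne_zero (α := T))
    linear_combination h
  have q16 : q 16 = (-436688) * e 4 * e 12 + (24848) * e 4 * e 4 * e 8 + (1068) * e 4 * e 4 * e 4 * e 4 + (-112) * e 4 * e 6 * e 6 + (-43568) * e 6 * e 10 + (149816) * e 8 * e 8 := by
    have h := hq 16
    simp only [Finset.sum_range_succ, Finset.sum_range_zero, Nat.reduceSub, Nat.reduceAdd, Nat.choose, p0, p1, p2, p3, p4, p5, p6, p7, p8, p9, p10, p11, p12, p13, p14, p15, p16] at h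
    push_cast at h
    apply mul_left_cancel₀ (two_ne_zero (α := T))
    linear_combination h
  have w1 : w 1 = 0 := by
    have h := hw 1
    simp only [Finset.sum_range_succ, Finset.sum_range_zero, Nat.reduceSub, w0, q1] at h
    push_cast at h
    apply mul_left_cancel₀ (show (1 : T) ≠ 0 by norm_num)
    linear_combination h
  have w2 : w 2 = 0 := by
    have h := hw 2
    simp only [Finset.sum_range_succ, Finset.sum_range_zero, Nat.reduceSub, w0, w1, q1, q2] at h
    push_cast at h
    apply mul_left_cancel₀ (show (2 : T) ≠ 0 by norm_num)
    linear_combination h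
  have w3 : w 3 = 0 := by
    have h := hw 3
    simp only [Finset.sum_range_succ, Finset.sum_range_zero, Nat.reduceSub, w0, w1, w2, q1, q2, q3] at h
    push_cast at h
    apply mul_left_cancel₀ (show (3 : T) ≠ 0 by norm_num)
    linear_combination h
  have w4 : w 4 = (7) * e 4 := by
    have h := hw 4
    simp only [Finset.sum_range_succ, Finset.sum_range_zero, Nat.reduceSub, w0, w1, w2, w3, q1, q2, q3, q4] at h
    push_cast at h
    apply mul_left_cancel₀ (show (4 : T) ≠ 0 by norm_num)
    linear_combination h
  have w5 : w 5 = 0 := by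
    have h := hw 5
    simp only [Finset.sum_range_succ, Finset.sum_range_zero, Nat.reduceSub, w0, w1, w2, w3, w4, q1, q2, q3, q4, q5] at h
    push_cast at h
    apply mul_left_cancel₀ (show (5 : T) ≠ 0 by norm_num)
    linear_combination h
  have w6 : w 6 = (-17) * e 6 := by
    have h := hw 6
    simp only [Finset.sum_range_succ, Finset.sum_range_zero, Nat.reduceSub, w0, w1, w2, w3, w4, w5, q1, q2, q3, q4, q5, q6] at h
    push_cast at h
    apply mul_left_cancel₀ (show (6 : T) ≠ 0 by norm_num)
    linear_combination h
  have w7 : w 7 = (-49) * e 7 := by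
    have h := hw 7
    simp only [Finset.sum_range_succ, Finset.sum_range_zero, Nat.reduceSub, w0, w1, w2, w3, w4, w5, w6, q1, q2, q3, q4, q5, q6, q7] at h
    push_cast at h
    apply mul_left_cancel₀ (show (7 : T) ≠ 0 by norm_num)
    linear_combination h
  have w8 : w 8 = (-113) * e 8 + (11) * e 4 * e 4 := by
    have h := hw 8
    simp only [Finset.sum_range_succ, Finset.sum_range_zero, Nat.reduceSub, w0, w1, w2, w3, w4, w5, w6, w7, q1, q2, q3, q4, q5, q6, q7, q8] at h
    push_cast at h
    apply mul_left_cancel₀ (show (8 : T) ≠ 0 by norm_num)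
    linear_combination h
  have w9 : w 9 = 0 := by
    have h := hw 9
    simp only [Finset.sum_range_succ, Finset.sum_range_zero, Nat.reduceSub, w0, w1, w2, w3, w4, w5, w6, w7, w8, q1, q2, q3, q4, q5, q6, q7, q8, q9] at h
    push_cast at h
    apply mul_left_cancel₀ (show (9 : T) ≠ 0 by norm_num)
    linear_combination h
  have w10 : w 10 = (-497) * e 10 + (-126) * e 4 * e 6 := by
    have h := hw 10
    simp only [Finset.sum_range_succ, Finset.sum_range_zero, Nat.reduceSub, w0, w1, w2, w3, w4, w5, w6, w7, w8, w9, q1, q2, q3, q4, q5, q6, q7, q8, q9, q10] at h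
    push_cast at h
    apply mul_left_cancel₀ (show (10 : T) ≠ 0 by norm_num)
    linear_combination h
  have w11 : w 11 = (-1009) * e 11 + (-174) * e 4 * e 7 := by
    have h := hw 11
    simp only [Finset.sum_range_succ, Finset.sum_range_zero, Nat.reduceSub, w0, w1, w2, w3, w4, w5, w6, w7, w8, w9, w10, q1, q2, q3, q4, q5, q6, q7, q8, q9, q10, q11] at h
    push_cast at h
    apply mul_left_cancel₀ (show (11 : T) ≠ 0 by norm_num)
    linear_combination h
  have w12 : w 12 = (-2033) * e 12 + (-78) * e 4 * e 8 + (-55) * e 4 * e 4 * e 4 + (-225) * e 6 * e 6 := by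
    have h := hw 12
    simp only [Finset.sum_range_succ, Finset.sum_range_zero, Nat.reduceSub, w0, w1, w2, w3, w4, w5, w6, w7, w8, w9, w10, w11, q1, q2, q3, q4, q5, q6, q7, q8, q9, q10, q11, q12] at h
    push_cast at h
    apply mul_left_cancel₀ (show (12 : T) ≠ 0 by norm_num)
    linear_combination h
  have w13 : w 13 = (-4081) * e 13 + (-630) * e 6 * e 7 := by
    have h := hw 13
    simp only [Finset.sum_range_succ, Finset.sum_range_zero, Nat.reduceSub, w0, w1, w2, w3, w4, w5, w6, w7, w8, w9, w10, w11, w12, q1, q2, q3, q4, q5, q6, q7, q8, q9, q10, q11, q12, q13] at h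
    push_cast at h
    apply mul_left_cancel₀ (show (13 : T) ≠ 0 by norm_num)
    linear_combination h
  have w14 : w 14 = (-8177) * e 14 + (1838) * e 4 * e 10 + (-405) * e 4 * e 4 * e 6 + (-198) * e 6 * e 8 + (-717) * e 7 * e 7 := by
    have h := hw 14
    simp only [Finset.sum_range_succ, Finset.sum_range_zero, Nat.reduceSub, w0, w1, w2, w3, w4, w5, w6, w7, w8, w9, w10, w11, w12, w13, q1, q2, q3, q4, q5, q6, q7, q8, q9, q10, q11, q12, q13, q14] at h
    push_cast at h
    apply mul_left_cancel₀ (show (14 : T) ≠ 0 by norm_num)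
    linear_combination h
  have w15 : w 15 = (-16369) * e 15 + (5302) * e 4 * e 11 + (291) * e 4 * e 4 * e 7 + (-2118) * e 7 * e 8 := by
    have h := hw 15
    simp only [Finset.sum_range_succ, Finset.sum_range_zero, Nat.reduceSub, w0, w1, w2, w3, w4, w5, w6, w7, w8, w9, w10, w11, w12, w13, w14, q1, q2, q3, q4, q5, q6, q7, q8, q9, q10, q11, q12, q13, q14, q15] at h
    push_cast at h
    apply mul_left_cancel₀ (show (15 : T) ≠ 0 by norm_num)
    linear_combination h
  have w16 : w 16 = (13062) * e 4 * e 12 + (2195) * e 4 * e 4 * e 8 + (-330) * e 4 * e 4 * e 4 * e 4 + (-1449) * e 4 * e 6 * e 6 + (11172) * e 6 * e 10 + (-2979) * e 8 * e 8 := by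
    have h := hw 16
    simp only [Finset.sum_range_succ, Finset.sum_range_zero, Nat.reduceSub, w0, w1, w2, w3, w4, w5, w6, w7, w8, w9, w10, w11, w12, w13, w14, w15, q1, q2, q3, q4, q5, q6, q7, q8, q9, q10, q11, q12, q13, q14, q15, q16] at h
    push_cast at h
    apply mul_left_cancel₀ (show (16 : T) ≠ 0 by norm_num)
    linear_combination h
  exact w16

/-- Index type of the pairs `j < k`. -/
abbrev PairIdx : Type := {p : Fin 15 × Fin 15 // p.1 < p.2}

/-- The weights `t_j + t_k`. -/
noncomputable def yy (R : Type) [CommRing R] (p : PairIdx) : MvPolynomial (Fin 15) R :=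
  X p.1.1 + X p.1.2

/-- Elementary symmetric polynomial in the weights `t_j + t_k`. -/
noncomputable def ww (R : Type) [CommRing R] (m : ℕ) : MvPolynomial (Fin 15) R :=
  ∑ s ∈ powersetCard m (univ : Finset PairIdx), ∏ p ∈ s, yy R p

/-- Power sums in the weights `t_j + t_k`. -/
noncomputable def qq (R : Type) [CommRing R] (m : ℕ) : MvPolynomial (Fin 15) R :=
  ∑ p : PairIdx, yy R p ^ m

lemma P_component : homogeneousComponent 16 P = ww (ZMod 2) 16 := by
  have hP : P = ∑ s ∈ (univ : Finset PairIdx).powerset, ∏ p ∈ s, yy (ZMod 2) p := by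
    rw [← Finset.prod_one_add]
    unfold P
    rw [Finset.prod_subtype (p := fun p : Fin 15 × Fin 15 => p.1 < p.2)
      (F := inferInstanceAs (Fintype PairIdx)) _ (by simp)]
    exact Finset.prod_congr rfl fun p _ => by rw [yy, add_assoc]
  rw [hP, map_sum, ww, Finset.powersetCard_eq_filter, Finset.sum_filter]
  refine Finset.sum_congr rfl fun s _ => ?_
  have hs : (∏ p ∈ s, yy (ZMod 2) p).IsHomogeneous (∑ p ∈ s, 1) :=
    IsHomogeneous.prod _ _ _ fun p _ => (isHomogeneous_X _ _).add (isHomogeneous_X _ _)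
  rw [homogeneousComponent_of_mem hs]
  simp [eq_comm]

lemma sum_anti {A : Type*} [CommRing A] (k : ℕ) (f g : ℕ → A) :
    ∑ a ∈ antidiagonal k with a.1 < k, (-1) ^ a.1 * f a.1 * g a.2
      = ∑ i ∈ range k, (-1) ^ i * f i * g (k - i) := by
  rw [Finset.sum_filter, Finset.Nat.sum_antidiagonal_eq_sum_range_succ_mk, Finset.sum_range_succ]
  simp only [lt_irrefl, if_false, add_zero]
  exact Finset.sum_congr rfl fun i hi => by simp [Finset.mem_range.mp hi]

lemma newton_e (k : ℕ) : (k : MvPolynomial (Fin 15) ℤ) * esymm (Fin 15) ℤ k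
    = (-1) ^ (k + 1) * ∑ i ∈ range k, (-1) ^ i * esymm (Fin 15) ℤ i * psum (Fin 15) ℤ (k - i) := by
  rw [mul_esymm_eq_sum, sum_anti]

lemma newton_w (k : ℕ) : (k : MvPolynomial (Fin 15) ℤ) * ww ℤ k
    = (-1) ^ (k + 1) * ∑ i ∈ range k, (-1) ^ i * ww ℤ i * qq ℤ (k - i) := by
  have h := congrArg (aeval (yy ℤ)) (mul_esymm_eq_sum PairIdx ℤ k)
  rw [sum_anti] at h
  simpa [esymm, psum, ww, qq] using h

lemma q_rel (m : ℕ) : 2 * qq ℤ m + 2 ^ m * psum (Fin 15) ℤ m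
    = ∑ i ∈ range (m + 1), psum (Fin 15) ℤ i * psum (Fin 15) ℤ (m - i) *
        (m.choose i : MvPolynomial (Fin 15) ℤ) := by
  have h1 : ∑ i ∈ range (m + 1), psum (Fin 15) ℤ i * psum (Fin 15) ℤ (m - i) *
        (m.choose i : MvPolynomial (Fin 15) ℤ)
      = ∑ p : Fin 15 × Fin 15, (X p.1 + X p.2 : MvPolynomial (Fin 15) ℤ) ^ m := by
    simp_rw [add_pow]
    rw [Finset.sum_comm]
    refine Finset.sum_congr rfl fun i _ => ?_
    rw [← Finset.sum_mul, psum, psum, Finset.sum_mul_sum, Fintype.sum_prod_type]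
  have hq : qq ℤ m = ∑ p : Fin 15 × Fin 15 with p.1 < p.2,
      (X p.1 + X p.2 : MvPolynomial (Fin 15) ℤ) ^ m := by
    rw [Finset.sum_subtype (p := fun p : Fin 15 × Fin 15 => p.1 < p.2) _ (by simp)]
    rfl
  have hq' : qq ℤ m = ∑ p : Fin 15 × Fin 15 with p.2 < p.1,
      (X p.1 + X p.2 : MvPolynomial (Fin 15) ℤ) ^ m := by
    rw [hq]
    refine Finset.sum_nbij' Prod.swap Prod.swap ?_ ?_ ?_ ?_ ?_ <;> simp [add_comm]
  have hd : 2 ^ m * psum (Fin 15) ℤ m = ∑ p : Fin 15 × Fin 15 with p.1 = p.2,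
      (X p.1 + X p.2 : MvPolynomial (Fin 15) ℤ) ^ m := by
    rw [psum, Finset.mul_sum]
    refine Finset.sum_nbij' (fun i => (i, i)) Prod.fst ?_ ?_ ?_ ?_ ?_ <;>
      simp [← two_mul, mul_pow]
  rw [h1, two_mul]
  nth_rewrite 1 [hq]
  rw [hq', hd, Finset.sum_filter, Finset.sum_filter, Finset.sum_filter,
    ← Finset.sum_add_distrib, ← Finset.sum_add_distrib]
  refine Finset.sum_congr rfl fun p _ => ?_
  rcases lt_trichotomy p.1 p.2 with h | h | h
  · simp [h, h.ne, h.not_gt]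
  · simp [h]
  · simp [h, h.ne', h.not_gt]

lemma sym_cancel (n : ℕ) (hn : n ≠ 0) (a : MvPolynomial (Fin 15) ℤ)
    (h : (n : MvPolynomial (Fin 15) ℤ) * a ∈ symmetricSubalgebra (Fin 15) ℤ) :
    a ∈ symmetricSubalgebra (Fin 15) ℤ := by
  rw [mem_symmetricSubalgebra] at h ⊢
  intro σ
  have := h σ
  rw [map_mul, map_natCast] at this
  exact mul_left_cancel₀ (by exact_mod_cast hn) this

lemma psum_mem (m : ℕ) : psum (Fin 15) ℤ m ∈ symmetricSubalgebra (Fin 15) ℤ :=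
  psum_isSymmetric _ _ _

lemma qq_mem (m : ℕ) : qq ℤ m ∈ symmetricSubalgebra (Fin 15) ℤ := by
  apply sym_cancel 2 two_ne_zero
  have := q_rel m
  rw [← eq_sub_iff_add_eq] at this
  rw [Nat.cast_ofNat, this]
  refine sub_mem (sum_mem fun i _ => mul_mem (mul_mem (psum_mem _) (psum_mem _)) (natCast_mem _ _))
    (mul_mem (pow_mem (ofNat_mem _ _) _) (psum_mem _))

lemma ww_zero : ww ℤ 0 = 1 := by simp [ww]

lemma ww_mem (m : ℕ) : ww ℤ m ∈ symmetricSubalgebra (Fin 15) ℤ := by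
  induction m using Nat.strong_induction_on with
  | _ m ih =>
    rcases Nat.eq_zero_or_pos m with rfl | hm
    · rw [ww_zero]; exact one_mem _
    · apply sym_cancel m hm.ne'
      rw [newton_w]
      exact mul_mem (pow_mem (neg_mem (one_mem _)) _) (sum_mem fun i hi =>
        mul_mem (mul_mem (pow_mem (neg_mem (one_mem _)) _) (ih i (Finset.mem_range.mp hi)))
          (qq_mem _))

/-- Kill the variables corresponding to `e₁, e₂, e₃, e₅, e₉`. -/
noncomputable def killE : MvPolynomial (Fin 15) ℤ →ₐ[ℤ] MvPolynomial (Fin 15) ℤ :=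
  aeval fun i => if i = 0 ∨ i = 1 ∨ i = 2 ∨ i = 4 ∨ i = 8 then 0 else X i

/-- The inverse of the fundamental theorem of symmetric polynomials. -/
noncomputable def toE : symmetricSubalgebra (Fin 15) ℤ →ₐ[ℤ] MvPolynomial (Fin 15) ℤ :=
  (esymmAlgEquiv (Fin 15) ℤ (n := 15) (by simp)).symm.toAlgHom

/-- Substitute elementary symmetric polynomials mod 2. -/
noncomputable def subE : MvPolynomial (Fin 15) ℤ →ₐ[ℤ] MvPolynomial (Fin 15) (ZMod 2) :=
  aeval fun i => e (i + 1)

lemma subE_toE (a : symmetricSubalgebra (Fin 15) ℤ) :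
    subE (toE a) = map (Int.castRingHom (ZMod 2)) a.1 := by
  obtain ⟨b, rfl⟩ := (esymmAlgEquiv (Fin 15) ℤ (n := 15) (by simp)).surjective a
  have : toE (esymmAlgEquiv (Fin 15) ℤ (n := 15) (by simp) b) = b :=
    AlgEquiv.symm_apply_apply _ _
  rw [this, esymmAlgEquiv_apply]
  clear this
  induction b using MvPolynomial.induction_on with
  | C r => simp [subE, esymmAlgHom]
  | add p q hp hq => simp only [map_add, hp, hq, Subalgebra.coe_add]
  | mul_X p i hp =>
    have h1 : subE (X i) = e (i + 1) := by simp [subE]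
    have h2 : ((esymmAlgHom (Fin 15) ℤ 15 (X i) : symmetricSubalgebra (Fin 15) ℤ) :
        MvPolynomial (Fin 15) ℤ) = esymm (Fin 15) ℤ (i + 1) := by simp [esymmAlgHom]
    rw [map_mul, map_mul, Subalgebra.coe_mul, map_mul, hp, h1, h2, map_esymm, e]

lemma toE_esymm (i : Fin 15) (h) : toE ⟨esymm (Fin 15) ℤ (i + 1), h⟩ = X i :=
  esymmAlgEquiv_symm_apply ..

lemma main_calc : killE (toE ⟨ww ℤ 16, ww_mem 16⟩) = (13062) * X 3 * X 11 + (2195) * X 3 * X 3 * X 7 + (-330) * X 3 * X 3 * X 3 * X 3 + (-1449) * X 3 * X 5 * X 5 + (11172) * X 5 * X 9 + (-2979) * X 7 * X 7 := by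
  let φ : symmetricSubalgebra (Fin 15) ℤ →ₐ[ℤ] MvPolynomial (Fin 15) ℤ := killE.comp toE
  let es : ℕ → symmetricSubalgebra (Fin 15) ℤ :=
    fun k => ⟨esymm (Fin 15) ℤ k, esymm_isSymmetric _ _ _⟩
  let ps : ℕ → symmetricSubalgebra (Fin 15) ℤ := fun k => ⟨psum (Fin 15) ℤ k, psum_mem k⟩
  let qs : ℕ → symmetricSubalgebra (Fin 15) ℤ := fun k => ⟨qq ℤ k, qq_mem k⟩
  let ws : ℕ → symmetricSubalgebra (Fin 15) ℤ := fun k => ⟨ww ℤ k, ww_mem k⟩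
  have he : ∀ i : Fin 15, φ (es (i + 1)) = killE (X i) := fun i => congrArg killE (toE_esymm i _)
  have hk : ∀ i : Fin 15, killE (X i) =
      if i = 0 ∨ i = 1 ∨ i = 2 ∨ i = 4 ∨ i = 8 then 0 else X i := fun i => by simp [killE]
  have e1 : φ (es 1) = 0 := (he 0).trans (by rw [hk]; rfl)
  have e2 : φ (es 2) = 0 := (he 1).trans (by rw [hk]; rfl)
  have e3 : φ (es 3) = 0 := (he 2).trans (by rw [hk]; rfl)
  have e5 : φ (es 5) = 0 := (he 4).trans (by rw [hk]; rfl)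
  have e9 : φ (es 9) = 0 := (he 8).trans (by rw [hk]; rfl)
  have e4 : φ (es 4) = X 3 := (he 3).trans (by rw [hk]; rfl)
  have e6 : φ (es 6) = X 5 := (he 5).trans (by rw [hk]; rfl)
  have e8 : φ (es 8) = X 7 := (he 7).trans (by rw [hk]; rfl)
  have e10 : φ (es 10) = X 9 := (he 9).trans (by rw [hk]; rfl)
  have e12 : φ (es 12) = X 11 := (he 11).trans (by rw [hk]; rfl)
  have e0 : φ (es 0) = 1 := by
    rw [show es 0 = 1 from Subtype.ext (by simp [es]), map_one]
  have e16 : φ (es 16) = 0 := by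
    rw [show es 16 = 0 from Subtype.ext (by
      simp only [es, esymm]
      rw [Finset.powersetCard_eq_empty.mpr (by simp)]; simp), map_zero]
  have p0 : φ (ps 0) = 15 := by
    rw [show ps 0 = 15 from Subtype.ext (by simp [ps, psum]; rfl), map_ofNat]
  have w0 : φ (ws 0) = 1 := by
    rw [show ws 0 = 1 from Subtype.ext (by simp [ws, ww_zero]), map_one]
  have key := newton_calc (fun k => φ (es k)) (fun k => φ (ps k)) (fun k => φ (qs k))
    (fun k => φ (ws k)) e0 e1 e2 e3 e5 e9 e16 p0 w0
    (fun k => by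
      have h : (k : symmetricSubalgebra (Fin 15) ℤ) * es k =
          (-1) ^ (k + 1) * ∑ i ∈ range k, (-1) ^ i * es i * ps (k - i) :=
        Subtype.ext (by simpa [es, ps] using newton_e k)
      simpa using congrArg φ h)
    (fun m => by
      have h : ((2 : ℕ) : symmetricSubalgebra (Fin 15) ℤ) * qs m + ((2 : ℕ) : _) ^ m * ps m =
          ∑ i ∈ range (m + 1), ps i * ps (m - i) * (m.choose i : symmetricSubalgebra (Fin 15) ℤ) :=
        Subtype.ext (by
          have h2 : ((2 : symmetricSubalgebra (Fin 15) ℤ) : MvPolynomial (Fin 15) ℤ) = 2 := rfl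
          simpa [qs, ps, h2] using q_rel m)
      have h' := congrArg φ h
      simp only [map_add, map_mul, map_pow, map_sum, map_natCast] at h'
      exact_mod_cast h')
    (fun k => by
      have h : (k : symmetricSubalgebra (Fin 15) ℤ) * ws k =
          (-1) ^ (k + 1) * ∑ i ∈ range k, (-1) ^ i * ws i * qs (k - i) :=
        Subtype.ext (by simpa [ws, qs] using newton_w k)
      simpa using congrArg φ h)
  simp only [e4, e6, e8, e10, e12] at key
  exact key

lemma subE_kill (a : MvPolynomial (Fin 15) ℤ) :
    subE a - subE (killE a) ∈ Ideal.span {e 1, e 2, e 3, e 5, e 9} := by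
  rw [← Ideal.Quotient.eq]
  set I : Ideal (MvPolynomial (Fin 15) (ZMod 2)) := Ideal.span {e 1, e 2, e 3, e 5, e 9} with hI
  have h : ((Ideal.Quotient.mk I).comp subE.toRingHom) =
      ((Ideal.Quotient.mk I).comp (subE.comp killE).toRingHom) := by
    apply MvPolynomial.ringHom_ext
    · intro r; simp
    · intro i
      have h1 : subE (X i) = e (i + 1) := by simp [subE]
      have h2 : killE (X i) = if i = 0 ∨ i = 1 ∨ i = 2 ∨ i = 4 ∨ i = 8 then 0 else X i := by
        simp [killE]
      change Ideal.Quotient.mk I (subE (X i)) = Ideal.Quotient.mk I (subE (killE (X i)))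
      rw [h2]
      split_ifs with hi
      · rw [map_zero, map_zero, Ideal.Quotient.eq_zero_iff_mem, h1]
        apply Ideal.subset_span
        rcases hi with rfl | rfl | rfl | rfl | rfl <;> simp
      · rfl
  exact congrArg (fun f => f a) h

/-- the degree-16 homogeneous component `P₁₆` of `P` is congruent to
`e₈² + e₄²e₈ + e₄e₆²` modulo the ideal `(e₁, e₂, e₃, e₅, e₉)`. -/
theorem lambda2_spin15_w16 :
    homogeneousComponent 16 P - (e 8 ^ 2 + e 4 ^ 2 * e 8 + e 4 * e 6 ^ 2)
      ∈ Ideal.span {e 1, e 2, e 3, e 5, e 9} := by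
  have h := subE_kill (toE ⟨ww ℤ 16, ww_mem 16⟩)
  have hm : map (Int.castRingHom (ZMod 2)) (ww ℤ 16) = ww (ZMod 2) 16 := by
    simp [ww, yy]
  have hw : subE (killE (toE ⟨ww ℤ 16, ww_mem 16⟩)) =
      e 8 ^ 2 + e 4 ^ 2 * e 8 + e 4 * e 6 ^ 2 := by
    have x3 : subE (X 3) = e 4 := by simp [subE]
    have x5 : subE (X 5) = e 6 := by simp [subE]
    have x7 : subE (X 7) = e 8 := by simp [subE]
    have two : (2 : MvPolynomial (Fin 15) (ZMod 2)) = 0 := CharTwo.two_eq_zero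
    rw [main_calc]
    simp only [map_add, map_mul, map_neg, map_ofNat, x3, x5, x7]
    linear_combination ((6531) * e 4 * subE (X 11) + (1097) * e 4 * e 4 * e 8 + (-165) * e 4 * e 4 * e 4 * e 4 + (-725) * e 4 * e 6 * e 6 + (5586) * e 6 * subE (X 9) + (-1490) * e 8 * e 8) * two
  rw [subE_toE, hw] at h
  dsimp only at h
  rw [hm] at h
  rw [P_component]
  exact h
end
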